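/- Let U ⊆ ℝⁿ be open, let g^{ij} : U → ℝ be smooth functions such that (g^{ij}(x)) is a symmetric invertible matrix for each x, with inverse matrix (g_{ij}(x)), and let Γ^i{}_{jk} := (1/2) Σ_m g^{im}( ∂_j g_{mk} + ∂_k g_{mj} − ∂_m g_{jk} ) be the associated Christoffel symbols. Let σ : U × U → ℝ be a smooth symmetric function (σ(x,x') = σ(x',x)) satisfying the Hamilton–Jacobi equation σ(x,x') = (1/2) Σ_{i,j} g^{ij}(x) σ_{,i}(x,x') σ_{,j}(x,x') on U × U, together with σ(x,x) = 0 and σ_{,i}(x,x) = 0 for all x ∈ U, and assume the diagonal Hessian ([σ_{,ij}](x)) is invertible for every x ∈ U. Then the coincidence limit of the fourth partial derivatives in the first argument is [σ_{,ijkl}](x') = 4 g_{m(l} Γ^m{}_{ij,k)} + 4 g_{m(l} Γ^n{}_{ij} Γ^m{}_{k)n} + 3 g_{nm} Γ^n{}_{(ij} Γ^m{}_{kl)}, where Γ^m{}_{ij,k} = ∂_k Γ^m{}_{ij}, repeated indices m, n are summed, and round brackets denote symmetrization (average over all permutations) of the four free indices i, j, k, l in each term. -/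

import Mathlib

/-!
With the base point `x'` fixed, everything happens for the single function `s = σ(·, x')` on `U`.
Let `V^a = g^{ab} ∂_b s` be its gradient, so that `∂_k s = g_{ka} V^a` (`HJ.ds_eq`).
Differentiating the Hamilton–Jacobi equation once and raising the index gives the geodesic
equation with source (`HJ.geodesic`)
`V^b ∂_b V^c + Γ^c_{ab} V^a V^b = V^c`.
At `x'` the field `V` vanishes. One derivative of the geodesic equation says that the matrix
`(∂_i V^c)(x')` is idempotent; it is invertible because the Hessian is, hence it is the identity
(`HJ.ev_dV`). Two and three derivatives then determine the second and third derivatives of `V` at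
`x'` in terms of `Γ`, `∂Γ` (`HJ.ev_ddV`, `HJ.ev_dddV`). Inserting these in three derivatives of
`∂_l s = g_{lc} V^c` and eliminating derivatives of `g_{ij}` by metric compatibility
`∂_i g_{kj} = g_{km} Γ^m_{ij} + g_{jm} Γ^m_{ik}` (`HJ.dG`) yields a formula for `s_{,ijkl}(x')` which
is not manifestly symmetric (`HJ.E_eq`). Since partial derivatives commute, the left-hand side
equals its average over all permutations of the indices, and averaging the right-hand side gives
the claim (`HJ.fourth`).

The computation only uses the Leibniz rule, commuting derivatives and evaluation at `x'`, so it is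
carried out in an arbitrary commutative `ℝ`-algebra with commuting derivations (`HJ`), and then
applied to the algebra of smooth functions on `U` (`smoothAlg`).
-/

open scoped BigOperators
open Set

/-- `∂/∂x^i` in the first argument of a two-point function. -/
noncomputable def d1 (n : ℕ) (i : Fin n) (f : (Fin n → ℝ) → (Fin n → ℝ) → ℝ) :
    (Fin n → ℝ) → (Fin n → ℝ) → ℝ :=
  fun x x' => fderiv ℝ (fun y => f y x') x (Pi.single i 1)

/-- `∂/∂x'^i` in the second argument of a two-point function. -/
noncomputable def d2 (n : ℕ) (i : Fin n) (f : (Fin n → ℝ) → (Fin n → ℝ) → ℝ) :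
    (Fin n → ℝ) → (Fin n → ℝ) → ℝ :=
  fun x x' => fderiv ℝ (fun y => f x y) x' (Pi.single i 1)

/-- The matrix of mixed second derivatives `σ_{,ij'} = ∂²σ/∂x^i∂x'^j` at `(x,x')`. -/
noncomputable def mixedHess (n : ℕ) (σ : (Fin n → ℝ) → (Fin n → ℝ) → ℝ)
    (x x' : Fin n → ℝ) : Matrix (Fin n) (Fin n) ℝ :=
  Matrix.of fun i j => d1 n i (d2 n j σ) x x'

/-- The pointwise matrix `(g^{ij}(x))` of a metric-coefficient field. -/
noncomputable def gMat (n : ℕ) (g : Fin n → Fin n → (Fin n → ℝ) → ℝ)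
    (x : Fin n → ℝ) : Matrix (Fin n) (Fin n) ℝ :=
  Matrix.of fun i j => g i j x

/-- The lowered metric `g_{ij}(x)`, the pointwise inverse of `(g^{ij}(x))`. -/
noncomputable def gLow (n : ℕ) (g : Fin n → Fin n → (Fin n → ℝ) → ℝ)
    (x : Fin n → ℝ) : Matrix (Fin n) (Fin n) ℝ :=
  (gMat n g x)⁻¹

/-- The partial derivative `∂_i f` of a function on `ℝⁿ`. -/
noncomputable def pd (n : ℕ) (i : Fin n) (f : (Fin n → ℝ) → ℝ) : (Fin n → ℝ) → ℝ :=
  fun y => fderiv ℝ f y (Pi.single i 1)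

/-- The Christoffel symbols
`Γ^i_{jk} = ½ g^{im}(∂_j g_{mk} + ∂_k g_{mj} − ∂_m g_{jk})`. -/
noncomputable def christoffel (n : ℕ) (g : Fin n → Fin n → (Fin n → ℝ) → ℝ)
    (i j k : Fin n) (x : Fin n → ℝ) : ℝ :=
  (1 / 2) * ∑ m, g i m x *
    (pd n j (fun y => gLow n g y m k) x + pd n k (fun y => gLow n g y m j) x -
      pd n m (fun y => gLow n g y j k) x)

/-- The unsymmetrized expression
`4 g_{ml} Γ^m_{ij,k} + 4 g_{ml} Γ^p_{ij} Γ^m_{kp} + 3 g_{pm} Γ^p_{ij} Γ^m_{kl}` at `x'`. -/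
noncomputable def sigma4Term (n : ℕ) (g : Fin n → Fin n → (Fin n → ℝ) → ℝ)
    (x' : Fin n → ℝ) (i j k l : Fin n) : ℝ :=
  4 * (∑ m, gLow n g x' m l * pd n k (christoffel n g m i j) x') +
  4 * (∑ m, ∑ p, gLow n g x' m l * christoffel n g p i j x' * christoffel n g m k p x') +
  3 * (∑ m, ∑ p, gLow n g x' p m * christoffel n g p i j x' * christoffel n g m k l x')

/-! ### The algebraic computation -/

theorem sum_inv {n : ℕ} {R : Type*} [CommRing R] {A B : Fin n → Fin n → R} (h : ∀ i j, ∑ m, A i m * B m j = if i = j then 1 else 0)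
    (k : Fin n) (f : Fin n → R) : ∑ a, A k a * ∑ b, B a b * f b = f k := by
  simp_rw [Finset.mul_sum, ← mul_assoc]
  rw [Finset.sum_comm]
  simp_rw [← Finset.sum_mul, h]
  simp

section Abstract
variable {n : ℕ} {R : Type*} [CommRing R] [Algebra ℝ R]

/-- Algebraic form of the data: a commutative `ℝ`-algebra `R` (the smooth functions on `U`) with
commuting derivations `D i` (the partial derivatives) and a character `ev` (evaluation at the base
point), mutually inverse symmetric matrices `g` (`g^{ij}`) and `G` (`g_{ij}`), their Christoffel
symbols `Γ`, and a solution `s` of the Hamilton–Jacobi equation whose gradient vanishes at the base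
point and whose Hessian there is nondegenerate. -/
structure HJ (n : ℕ) (R : Type*) [CommRing R] [Algebra ℝ R] where
  D : Fin n → Derivation ℝ R R
  comm : ∀ i j f, D i (D j f) = D j (D i f)
  ev : R →ₐ[ℝ] ℝ
  g : Fin n → Fin n → R
  G : Fin n → Fin n → R
  gsymm : ∀ i j, g i j = g j i
  gG : ∀ i j, ∑ m, g i m * G m j = if i = j then 1 else 0
  Gg : ∀ i j, ∑ m, G i m * g m j = if i = j then 1 else 0
  Gsymm : ∀ i j, G i j = G j i
  Γ : Fin n → Fin n → Fin n → R
  Γdef : ∀ i j k, 2 * Γ i j k = ∑ m, g i m * (D j (G m k) + D k (G m j) - D m (G j k))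
  s : R
  hj : 2 * s = ∑ i, ∑ j, g i j * D i s * D j s
  ev1 : ∀ i, ev (D i s) = 0
  hess : IsUnit (Matrix.of fun i j => ev (D i (D j s)) : Matrix (Fin n) (Fin n) ℝ).det

namespace HJ
variable (S : HJ n R)

theorem two_cancel {a b : R} (h : 2 * a = 2 * b) : a = b := by
  have h2 : ∀ c : R, (1 / 2 : ℝ) • (2 * c) = c := fun c => by
    rw [show (2 : R) * c = (2 : ℝ) • c by rw [two_smul, two_mul], smul_smul]; norm_num
  rw [← h2 a, h, h2]

/-- The gradient vector field `V^a = g^{ab} ∂_b s`. -/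
def V (a : Fin n) : R := ∑ b, S.g a b * S.D b S.s

theorem ds_eq (k : Fin n) : S.D k S.s = ∑ a, S.G k a * S.V a :=
  (sum_inv S.Gg k fun b => S.D b S.s).symm

theorem two_s : 2 * S.s = ∑ a, S.V a * S.D a S.s := by
  rw [S.hj, Finset.sum_comm]
  refine Finset.sum_congr rfl fun a _ => ?_
  rw [V, Finset.sum_mul]
  exact Finset.sum_congr rfl fun b _ => by rw [S.gsymm b a]

theorem Γsymm (i j k : Fin n) : S.Γ i j k = S.Γ i k j := by
  apply two_cancel
  rw [S.Γdef, S.Γdef]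
  refine Finset.sum_congr rfl fun m _ => ?_
  rw [S.Gsymm j k]; ring

/-- The Christoffel symbols with lowered first index. -/
theorem lowerΓ (k i j : Fin n) :
    2 * ∑ m, S.G k m * S.Γ m i j = S.D i (S.G k j) + S.D j (S.G k i) - S.D k (S.G i j) := by
  rw [Finset.mul_sum]
  simp_rw [mul_left_comm (2 : R), S.Γdef]
  exact sum_inv S.Gg k _

/-- Metric compatibility of the Christoffel connection. -/
theorem dG (i k j : Fin n) :
    S.D i (S.G k j) = ∑ m, S.G k m * S.Γ m i j + ∑ m, S.G j m * S.Γ m i k := by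
  apply two_cancel
  rw [mul_add, lowerΓ, lowerΓ, S.Gsymm j k, S.Gsymm j i, S.Gsymm k i]; ring

/-- One derivative of the Hamilton–Jacobi equation `2s = g_{ab} V^a V^b`, arranged as transport of
`∂_k s` along `V`. -/
theorem hj_deriv (k : Fin n) : 2 * S.D k S.s =
    2 * ∑ b, S.V b * S.D b (S.D k S.s) - ∑ a, ∑ b, S.D k (S.G a b) * (S.V a * S.V b) := by
  have h1 := congrArg (S.D k) S.two_s
  have h2 : ∀ b, S.D b (S.D k S.s) = ∑ a, (S.D k (S.G b a) * S.V a + S.G b a * S.D k (S.V a)) := by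
    intro b
    rw [S.comm, S.ds_eq b, map_sum]
    exact Finset.sum_congr rfl fun a _ => by rw [Derivation.leibniz]; simp only [smul_eq_mul]; ring
  have h3 : ∀ b, S.D k (S.D b S.s) = S.D b (S.D k S.s) := fun b => S.comm _ _ _
  have h4 : S.D k (2 * S.s) = 2 * S.D k S.s := by
    rw [two_mul, map_add, two_mul]
  rw [h4] at h1
  rw [h1, map_sum]
  simp only [Derivation.leibniz, smul_eq_mul, h3, Finset.sum_add_distrib]
  have h5 : ∑ a, S.D a S.s * S.D k (S.V a) = ∑ b, ∑ a, S.V b * (S.G b a * S.D k (S.V a)) := by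
    rw [Finset.sum_comm]
    refine Finset.sum_congr rfl fun a _ => ?_
    rw [S.ds_eq, Finset.sum_mul]
    exact Finset.sum_congr rfl fun b _ => by rw [S.Gsymm]; ring
  have h6 : ∑ b, S.V b * S.D b (S.D k S.s) = ∑ a, ∑ b, S.D k (S.G a b) * (S.V a * S.V b)
      + ∑ b, ∑ a, S.V b * (S.G b a * S.D k (S.V a)) := by
    rw [← Finset.sum_add_distrib]
    refine Finset.sum_congr rfl fun a _ => ?_
    rw [h2, Finset.mul_sum, ← Finset.sum_add_distrib]
    exact Finset.sum_congr rfl fun b _ => by ring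
  rw [h5]
  linear_combination -h6

/-- The geodesic equation `V^b ∂_b V^c + Γ^c_{ab} V^a V^b = V^c`. -/
theorem geodesic (c : Fin n) :
    ∑ b, S.V b * S.D b (S.V c) + ∑ a, ∑ b, S.Γ c a b * S.V a * S.V b = S.V c := by
  have key : ∀ k, ∑ c, S.G k c * (∑ b, S.V b * S.D b (S.V c) +
      ∑ a, ∑ b, S.Γ c a b * S.V a * S.V b) = ∑ c, S.G k c * S.V c := by
    intro k
    apply two_cancel
    rw [← S.ds_eq, S.hj_deriv]
    simp_rw [mul_add, Finset.sum_add_distrib]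
    have h1 : ∑ c, S.G k c * ∑ a, ∑ b, S.Γ c a b * S.V a * S.V b =
        ∑ a, ∑ b, (∑ c, S.G k c * S.Γ c a b) * (S.V a * S.V b) := by
      simp_rw [Finset.mul_sum, Finset.sum_mul]
      rw [Finset.sum_comm]
      refine Finset.sum_congr rfl fun a _ => ?_
      rw [Finset.sum_comm]
      exact Finset.sum_congr rfl fun b _ => Finset.sum_congr rfl fun c _ => by ring
    have h2 : 2 * ∑ c, S.G k c * ∑ a, ∑ b, S.Γ c a b * S.V a * S.V b =
        2 * ∑ a, ∑ b, S.D a (S.G k b) * (S.V a * S.V b)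
          - ∑ a, ∑ b, S.D k (S.G a b) * (S.V a * S.V b) := by
      have aux : ∀ X Y : Fin n → Fin n → R,
          2 * ∑ a, ∑ b, X a b * Y a b = ∑ a, ∑ b, 2 * X a b * Y a b := by
        intro X Y
        simp_rw [Finset.mul_sum, mul_assoc]
      rw [h1, aux]
      simp_rw [S.lowerΓ, sub_mul, add_mul,
        Finset.sum_sub_distrib, Finset.sum_add_distrib]
      have : ∑ a, ∑ b, S.D b (S.G k a) * (S.V a * S.V b) =
          ∑ a, ∑ b, S.D a (S.G k b) * (S.V a * S.V b) := by
        rw [Finset.sum_comm]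
        exact Finset.sum_congr rfl fun b _ => Finset.sum_congr rfl fun c _ => by ring
      rw [this]
      ring
    have h3 : ∑ b, S.V b * S.D b (S.D k S.s) = ∑ c, S.G k c * ∑ b, S.V b * S.D b (S.V c)
        + ∑ a, ∑ b, S.D a (S.G k b) * (S.V a * S.V b) := by
      simp_rw [S.ds_eq k, map_sum, Derivation.leibniz, smul_eq_mul, Finset.mul_sum, mul_add,
        Finset.sum_add_distrib]
      congr 1
      · rw [Finset.sum_comm]
        exact Finset.sum_congr rfl fun b _ => Finset.sum_congr rfl fun c _ => by ring
      · exact Finset.sum_congr rfl fun b _ => Finset.sum_congr rfl fun c _ => by ring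
    linear_combination h2 - 2 * h3
  rw [← sum_inv S.gG c (fun c => ∑ b, S.V b * S.D b (S.V c) +
      ∑ a, ∑ b, S.Γ c a b * S.V a * S.V b)]
  simp_rw [key]
  exact sum_inv S.gG c _

theorem sum_ite_const {M : Type*} [AddCommMonoid M] (p : Prop) [Decidable p] (f : Fin n → M) :
    (∑ x, if p then f x else 0) = if p then ∑ x, f x else 0 := by
  split_ifs <;> simp

theorem ev_V (c : Fin n) : S.ev (S.V c) = 0 := by
  simp [V, S.ev1]

/-- At the base point `∂_i V^c = δ_i^c`: this matrix is idempotent by the geodesic equation and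
invertible because the Hessian is. -/
theorem ev_dV (i c : Fin n) : S.ev (S.D i (S.V c)) = if i = c then 1 else 0 := by
  set P : Matrix (Fin n) (Fin n) ℝ := Matrix.of fun i c => S.ev (S.D i (S.V c)) with hP
  have hPP : P * P = P := by
    ext i c
    have h := congrArg (fun f => S.ev (S.D i f)) (S.geodesic c)
    simpa [Derivation.leibniz, ev_V, Matrix.mul_apply, hP, mul_comm] using h
  have hPu : IsUnit P.det := by
    have h : P = (Matrix.of fun i j => S.ev (S.D i (S.D j S.s)) : Matrix (Fin n) (Fin n) ℝ) *
        (Matrix.of fun a b => S.ev (S.g a b)) := by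
      ext i c
      simp [hP, V, Matrix.mul_apply, Derivation.leibniz, S.ev1, mul_comm, S.gsymm c]
    rw [h, Matrix.det_mul]
    refine S.hess.mul ?_
    have h2 : (Matrix.of fun a b => S.ev (S.g a b) : Matrix (Fin n) (Fin n) ℝ) *
        (Matrix.of fun a b => S.ev (S.G a b)) = 1 := by
      ext i j
      have := congrArg S.ev (S.gG i j)
      simp only [map_sum, map_mul] at this
      simp only [Matrix.mul_apply, Matrix.of_apply, this, Matrix.one_apply]
      split_ifs <;> simp
    exact (Matrix.isUnit_iff_isUnit_det _).1 (IsUnit.of_mul_eq_one _ h2)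
  have h1 : P = 1 := by
    have := congrArg (P⁻¹ * ·) hPP
    simpa [← mul_assoc, Matrix.nonsing_inv_mul P hPu] using this
  have := congrFun (congrFun h1 i) c
  simpa [hP, Matrix.one_apply] using this

theorem ev_ddV (i j c : Fin n) : S.ev (S.D i (S.D j (S.V c))) = - S.ev (S.Γ c i j) := by
  have h := congrArg (fun f => S.ev (S.D i (S.D j f))) (S.geodesic c)
  simp only [Derivation.leibniz, ev_V, ev_dV, map_sum, map_add, map_mul, smul_eq_mul,
    Finset.sum_add_distrib, mul_zero, zero_mul, add_zero, zero_add, mul_ite, ite_mul, mul_one,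
    one_mul, Finset.sum_const_zero, Finset.sum_ite_eq, Finset.sum_ite_eq', Finset.mem_univ,
    if_true, sum_ite_const] at h
  rw [S.comm j i, S.Γsymm c j i] at h
  linarith

/-- Three derivatives of the geodesic equation at the base point. The `ΓΓ` terms come with weight
`+1` from `V^b ∂_b V^c` and `-2` from `Γ^c_{ab} V^a V^b`. -/
theorem ev_dddV (i j k c : Fin n) : 3 * S.ev (S.D i (S.D j (S.D k (S.V c)))) =
    (∑ p, S.ev (S.Γ c i p) * S.ev (S.Γ p j k) + ∑ p, S.ev (S.Γ c j p) * S.ev (S.Γ p i k)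
      + ∑ p, S.ev (S.Γ c k p) * S.ev (S.Γ p i j))
    - 2 * (S.ev (S.D i (S.Γ c j k)) + S.ev (S.D j (S.Γ c i k)) + S.ev (S.D k (S.Γ c i j))) := by
  have h := congrArg (fun f => S.ev (S.D i (S.D j (S.D k f)))) (S.geodesic c)
  simp only [Derivation.leibniz, ev_V, ev_dV, ev_ddV, map_sum, map_add, map_mul, smul_eq_mul,
    Finset.sum_add_distrib, mul_zero, zero_mul, add_zero, zero_add, mul_ite, ite_mul, mul_one,
    one_mul, Finset.sum_const_zero, Finset.sum_ite_eq, Finset.sum_ite_eq', Finset.mem_univ,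
    if_true, sum_ite_const, ite_self, neg_zero, neg_neg, mul_add, mul_neg, neg_mul, Finset.sum_neg_distrib] at h
  have e : ∀ a b d, ∑ x, S.ev (S.Γ c x a) * S.ev (S.Γ x b d) =
      ∑ x, S.ev (S.Γ c a x) * S.ev (S.Γ x b d) := fun a b d =>
    Finset.sum_congr rfl fun x _ => by rw [S.Γsymm c x a]
  have c1 : S.D j (S.D k (S.D i (S.V c))) = S.D i (S.D j (S.D k (S.V c))) := by
    rw [S.comm k i, S.comm j i]
  rw [c1, S.comm k j] at h
  simp only [e, mul_comm (S.ev (S.Γ _ j k))] at h ⊢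
  rw [S.Γsymm c k j, S.Γsymm c k i, S.Γsymm c j i] at h
  linarith

/-- `g_{md} Γ^m_{ab,c}` at the base point. -/
def T1 (a b c d : Fin n) : ℝ := ∑ m, S.ev (S.G m d) * S.ev (S.D c (S.Γ m a b))

/-- `g_{md} Γ^p_{ab} Γ^m_{cp}` at the base point. -/
def T2 (a b c d : Fin n) : ℝ :=
  ∑ m, ∑ p, S.ev (S.G m d) * S.ev (S.Γ p a b) * S.ev (S.Γ m c p)

/-- `g_{pm} Γ^p_{ab} Γ^m_{cd}` at the base point. -/
def T3 (a b c d : Fin n) : ℝ :=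
  ∑ m, ∑ p, S.ev (S.G p m) * S.ev (S.Γ p a b) * S.ev (S.Γ m c d)

theorem dGΓ (a b c d : Fin n) :
    ∑ m, S.ev (S.D c (S.G d m)) * S.ev (S.Γ m a b) = S.T2 a b c d + S.T3 a b c d := by
  simp only [S.dG c d, map_add, map_sum, map_mul, add_mul, Finset.sum_add_distrib, T2, T3,
    Finset.sum_mul]
  congr 1
  · rw [Finset.sum_comm]
    exact Finset.sum_congr rfl fun m _ => Finset.sum_congr rfl fun p _ => by
      rw [S.Gsymm d]; ring
  · rw [Finset.sum_comm]
    exact Finset.sum_congr rfl fun m _ => Finset.sum_congr rfl fun p _ => by ring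

theorem ev_ddG (a b c d : Fin n) : S.ev (S.D a (S.D b (S.G c d))) =
    S.T1 b d a c + S.T2 b d a c + S.T3 b d a c + S.T1 b c a d + S.T2 b c a d + S.T3 b c a d := by
  have h1 := S.dGΓ b d a c
  have h2 := S.dGΓ b c a d
  rw [S.dG b c d]
  simp only [map_add, map_sum, Derivation.leibniz, smul_eq_mul, map_mul, Finset.sum_add_distrib]
  simp only [mul_comm (S.ev (S.Γ _ _ _)), h1, h2, T1, fun m => S.Gsymm m c,
    fun m => S.Gsymm m d]
  ring

/-- The fourth partial derivative `s_{,abcd}` at the base point. -/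
def E (a b c d : Fin n) : ℝ := S.ev (S.D a (S.D b (S.D c (S.D d S.s))))

theorem sum_dddV (i j k l : Fin n) :
    3 * ∑ c, S.ev (S.G l c) * S.ev (S.D i (S.D j (S.D k (S.V c)))) =
    S.T2 j k i l + S.T2 i k j l + S.T2 i j k l
      - 2 * (S.T1 j k i l + S.T1 i k j l + S.T1 i j k l) := by
  have h : ∀ a b c, S.T2 a b c l = ∑ m, S.ev (S.G l m) *
      ∑ p, S.ev (S.Γ m c p) * S.ev (S.Γ p a b) := by
    intro a b c
    simp only [T2, Finset.mul_sum]
    exact Finset.sum_congr rfl fun m _ => Finset.sum_congr rfl fun p _ => by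
      rw [S.Gsymm l]; ring
  rw [h, h, h, T1, T1, T1, Finset.mul_sum]
  simp only [mul_left_comm (3 : ℝ), ev_dddV, mul_add, mul_sub, Finset.sum_add_distrib,
    Finset.sum_sub_distrib, S.Gsymm l, mul_left_comm _ (2 : ℝ), ← Finset.mul_sum]

/-- Three derivatives of `∂_l s = g_{lc} V^c` at the base point; the right-hand side is symmetric in
`i, j, k, l` only implicitly. -/
theorem E_eq (i j k l : Fin n) : 3 * S.E i j k l =
    S.T2 j k i l + S.T2 i k j l + S.T2 i j k l
      - 2 * (S.T1 j k i l + S.T1 i k j l + S.T1 i j k l)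
    - 3 * (S.T2 j k i l + S.T3 j k i l + S.T2 i k j l + S.T3 i k j l + S.T2 i j k l + S.T3 i j k l)
    + 3 * (S.T1 j k i l + S.T2 j k i l + S.T3 j k i l + S.T1 j l i k + S.T2 j l i k + S.T3 j l i k
      + S.T1 k j i l + S.T2 k j i l + S.T3 k j i l + S.T1 k l i j + S.T2 k l i j + S.T3 k l i j
      + S.T1 k i j l + S.T2 k i j l + S.T3 k i j l + S.T1 k l j i + S.T2 k l j i + S.T3 k l j i)
    := by
  have h : S.E i j k l = ∑ c, S.ev (S.G l c) * S.ev (S.D i (S.D j (S.D k (S.V c))))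
      - (∑ m, S.ev (S.D i (S.G l m)) * S.ev (S.Γ m j k)
        + ∑ m, S.ev (S.D j (S.G l m)) * S.ev (S.Γ m i k)
        + ∑ m, S.ev (S.D k (S.G l m)) * S.ev (S.Γ m i j))
      + (S.ev (S.D i (S.D j (S.G l k))) + S.ev (S.D i (S.D k (S.G l j)))
        + S.ev (S.D j (S.D k (S.G l i)))) := by
    rw [E, S.ds_eq l]
    simp only [Derivation.leibniz, ev_V, ev_dV, ev_ddV, map_sum, map_add, map_mul, smul_eq_mul,
      Finset.sum_add_distrib, mul_zero, zero_mul, zero_add, mul_ite, ite_mul, mul_one,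
      one_mul, Finset.sum_const_zero, Finset.sum_ite_eq, Finset.mem_univ,
      if_true, mul_neg, neg_mul, Finset.sum_neg_distrib, mul_comm (S.ev (S.Γ _ _ _))]
    ring
  have h1 := S.sum_dddV i j k l
  rw [h, dGΓ, dGΓ, dGΓ, ev_ddG, ev_ddG, ev_ddG]
  linarith

theorem E_perm (y : Fin 4 → Fin n) (τ : Equiv.Perm (Fin 4)) :
    S.E (y (τ 0)) (y (τ 1)) (y (τ 2)) (y (τ 3)) = S.E (y 0) (y 1) (y 2) (y 3) := by
  have : LeftCommutative fun (i : Fin n) (f : R) => S.D i f := ⟨fun i j f => S.comm i j f⟩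
  have h := List.Perm.foldr_eq (f := fun (i : Fin n) (f : R) => S.D i f)
    (Equiv.Perm.ofFn_comp_perm τ y) S.s
  simp only [List.ofFn_succ, List.ofFn_zero, Function.comp, List.foldr] at h
  exact congrArg S.ev h

/-- A sum over all permutations of the indices does not depend on the order in which the slots of
`F` are filled. -/
theorem sum_relabel (F : Fin n → Fin n → Fin n → Fin n → ℝ) (y : Fin 4 → Fin n) (a b c d : Fin 4)
    (h : Function.Injective ![a, b, c, d]) :
    ∑ τ : Equiv.Perm (Fin 4), F (y (τ a)) (y (τ b)) (y (τ c)) (y (τ d)) =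
    ∑ τ : Equiv.Perm (Fin 4), F (y (τ 0)) (y (τ 1)) (y (τ 2)) (y (τ 3)) :=
  Equiv.sum_comp (Equiv.mulRight (Equiv.ofBijective _ (Finite.injective_iff_bijective.1 h)))
    fun τ => F (y (τ 0)) (y (τ 1)) (y (τ 2)) (y (τ 3))

/-- The symmetrized formula: average `E_eq` over all permutations. -/
theorem fourth (y : Fin 4 → Fin n) : S.E (y 0) (y 1) (y 2) (y 3) =
    (1 / 24) * ∑ τ : Equiv.Perm (Fin 4), (4 * S.T1 (y (τ 0)) (y (τ 1)) (y (τ 2)) (y (τ 3))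
      + 4 * S.T2 (y (τ 0)) (y (τ 1)) (y (τ 2)) (y (τ 3))
      + 3 * S.T3 (y (τ 0)) (y (τ 1)) (y (τ 2)) (y (τ 3))) := by
  have h := Finset.sum_congr rfl fun (τ : Equiv.Perm (Fin 4)) (_ : τ ∈ Finset.univ) =>
    S.E_eq (y (τ 0)) (y (τ 1)) (y (τ 2)) (y (τ 3))
  simp only [E_perm, Finset.sum_const, Finset.card_univ, Fintype.card_perm, Fintype.card_fin,
    Finset.sum_add_distrib, Finset.sum_sub_distrib, ← Finset.mul_sum] at h ⊢
  have r := fun F a b c d h => sum_relabel F y a b c d h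
  rw [show Nat.factorial 4 = 24 from rfl, nsmul_eq_mul] at h
  have p1 := fun F => r F 1 2 0 3 (by decide)
  have p2 := fun F => r F 0 2 1 3 (by decide)
  have p3 := fun F => r F 1 3 0 2 (by decide)
  have p4 := fun F => r F 2 1 0 3 (by decide)
  have p5 := fun F => r F 2 3 0 1 (by decide)
  have p6 := fun F => r F 2 0 1 3 (by decide)
  have p7 := fun F => r F 2 3 1 0 (by decide)
  simp only [p1 S.T1, p2 S.T1, p3 S.T1, p4 S.T1, p5 S.T1, p6 S.T1, p7 S.T1,
    p1 S.T2, p2 S.T2, p3 S.T2, p4 S.T2, p5 S.T2, p6 S.T2, p7 S.T2,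
    p1 S.T3, p2 S.T3, p3 S.T3, p4 S.T3, p5 S.T3, p6 S.T3, p7 S.T3] at h
  push_cast at h
  linarith

end HJ
end Abstract

/-! ### The algebra of smooth functions on `U` -/

section Smooth
variable {n : ℕ} {U : Set (Fin n → ℝ)}

theorem pd_congr (hU : IsOpen U) {F H : (Fin n → ℝ) → ℝ} (h : EqOn F H U) (i : Fin n) :
    EqOn (pd n i F) (pd n i H) U := fun x hx => by
  have : F =ᶠ[nhds x] H := Filter.eventuallyEq_of_mem (hU.mem_nhds hx) h
  simp only [pd, this.fderiv_eq]

theorem pd_smooth (hU : IsOpen U) {F : (Fin n → ℝ) → ℝ} (h : ContDiffOn ℝ (⊤ : ℕ∞) F U)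
    (i : Fin n) : ContDiffOn ℝ (⊤ : ℕ∞) (pd n i F) U :=
  (h.fderiv_of_isOpen hU (m := (⊤ : ℕ∞)) (by simp)).clm_apply contDiffOn_const

theorem diffAt (hU : IsOpen U) {F : (Fin n → ℝ) → ℝ} (h : ContDiffOn ℝ (⊤ : ℕ∞) F U)
    {x : Fin n → ℝ} (hx : x ∈ U) : DifferentiableAt ℝ F x :=
  (h.contDiffAt (hU.mem_nhds hx)).differentiableAt (by simp)

theorem pd_comm (hU : IsOpen U) {F : (Fin n → ℝ) → ℝ} (h : ContDiffOn ℝ (⊤ : ℕ∞) F U)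
    (i j : Fin n) {x : Fin n → ℝ} (hx : x ∈ U) : pd n i (pd n j F) x = pd n j (pd n i F) x := by
  have hd : DifferentiableAt ℝ (fderiv ℝ F) x :=
    ((h.fderiv_of_isOpen hU (m := (⊤ : ℕ∞)) (by simp)).contDiffAt
      (hU.mem_nhds hx)).differentiableAt (by simp)
  have key : ∀ a b : Fin n, pd n a (pd n b F) x =
      fderiv ℝ (fderiv ℝ F) x (Pi.single a 1) (Pi.single b 1) := by
    intro a b
    have : fderiv ℝ (fun y => fderiv ℝ F y (Pi.single b 1)) x =
        (fderiv ℝ (fderiv ℝ F) x).flip (Pi.single b 1) := by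
      rw [fderiv_clm_apply hd (differentiableAt_const _)]
      simp
    exact congrArg (fun L : (Fin n → ℝ) →L[ℝ] ℝ => L (Pi.single a 1)) this
  rw [key, key]
  have hs : IsSymmSndFDerivAt ℝ F x :=
    (h.contDiffAt (hU.mem_nhds hx)).isSymmSndFDerivAt (by
      rw [minSmoothness_of_isRCLikeNormedField]
      exact WithTop.coe_le_coe.2 (le_top (a := (2 : ℕ∞))))
  exact hs.eq _ _

/-- The algebra of smooth functions on the open set `U`, encoded as functions on the subtype `U`
that are restrictions of functions on `ℝⁿ` smooth on `U`; equality in it is equality on `U`. -/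
def smoothAlg (U : Set (Fin n → ℝ)) : Subalgebra ℝ (U → ℝ) where
  carrier := {f | ∃ F : (Fin n → ℝ) → ℝ, ContDiffOn ℝ (⊤ : ℕ∞) F U ∧ ∀ x : U, f x = F x}
  mul_mem' := by
    rintro a b ⟨F, hF, h1⟩ ⟨H, hH, h2⟩
    exact ⟨fun x => F x * H x, hF.mul hH, fun x => by simp [h1, h2]⟩
  add_mem' := by
    rintro a b ⟨F, hF, h1⟩ ⟨H, hH, h2⟩
    exact ⟨fun x => F x + H x, hF.add hH, fun x => by simp [h1, h2]⟩
  algebraMap_mem' r := ⟨fun _ => r, contDiffOn_const, fun _ => rfl⟩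

/-- Restriction to `U` of a function smooth on `U`. -/
def smoothMk (F : (Fin n → ℝ) → ℝ) (hF : ContDiffOn ℝ (⊤ : ℕ∞) F U) : smoothAlg U :=
  ⟨fun x => F x, F, hF, fun _ => rfl⟩

theorem smoothMk_ext {F H : (Fin n → ℝ) → ℝ} {hF : ContDiffOn ℝ (⊤ : ℕ∞) F U}
    {hH : ContDiffOn ℝ (⊤ : ℕ∞) H U} (h : EqOn F H U) : smoothMk F hF = smoothMk H hH :=
  Subtype.ext (funext fun x => h x.2)

theorem exists_smoothMk (f : smoothAlg U) : ∃ F, ∃ hF : ContDiffOn ℝ (⊤ : ℕ∞) F U,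
    f = smoothMk F hF := by
  obtain ⟨f, F, hF, h⟩ := f
  exact ⟨F, hF, Subtype.ext (funext h)⟩

/-- The partial derivative on `smoothAlg U` as a plain function, computed on a chosen extension; by
`smoothD0_mk` the choice is irrelevant. -/
noncomputable def smoothD0 (hU : IsOpen U) (i : Fin n) (f : smoothAlg U) : smoothAlg U :=
  smoothMk (pd n i (exists_smoothMk f).choose)
    (pd_smooth hU (exists_smoothMk f).choose_spec.choose i)

theorem smoothD0_mk (hU : IsOpen U) (i : Fin n) (F : (Fin n → ℝ) → ℝ)
    (hF : ContDiffOn ℝ (⊤ : ℕ∞) F U) :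
    smoothD0 hU i (smoothMk F hF) = smoothMk (pd n i F) (pd_smooth hU hF i) := by
  refine smoothMk_ext (pd_congr hU (fun x hx => ?_) i)
  have h := (exists_smoothMk (smoothMk F hF)).choose_spec.choose_spec
  exact (congrFun (congrArg Subtype.val h) ⟨x, hx⟩).symm

/-- The partial derivative `∂_i` as a derivation of `smoothAlg U`. -/
noncomputable def smoothD (hU : IsOpen U) (i : Fin n) :
    Derivation ℝ (smoothAlg U) (smoothAlg U) :=
  Derivation.mk'
    { toFun := smoothD0 hU i
      map_add' := by
        intro a b
        obtain ⟨F, hF, rfl⟩ := exists_smoothMk a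
        obtain ⟨H, hH, rfl⟩ := exists_smoothMk b
        have h : smoothMk F hF + smoothMk H hH = smoothMk (F + H) (hF.add hH) := rfl
        rw [h, smoothD0_mk, smoothD0_mk, smoothD0_mk]
        refine Subtype.ext (funext fun x => ?_)
        change pd n i (F + H) x = pd n i F x + pd n i H x
        simp only [pd]
        rw [fderiv_add (diffAt hU hF x.2) (diffAt hU hH x.2)]
        rfl
      map_smul' := by
        intro r a
        obtain ⟨F, hF, rfl⟩ := exists_smoothMk a
        have h : r • smoothMk F hF = smoothMk (r • F) (hF.const_smul r) := rfl
        rw [h, smoothD0_mk, smoothD0_mk]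
        refine Subtype.ext (funext fun x => ?_)
        change pd n i (r • F) x = r • pd n i F x
        simp only [pd]
        rw [fderiv_const_smul (diffAt hU hF x.2)]
        rfl }
    (by
      intro a b
      obtain ⟨F, hF, rfl⟩ := exists_smoothMk a
      obtain ⟨H, hH, rfl⟩ := exists_smoothMk b
      have h : smoothMk F hF * smoothMk H hH = smoothMk (F * H) (hF.mul hH) := rfl
      change smoothD0 hU i _ = smoothMk F hF • smoothD0 hU i _ + smoothMk H hH • smoothD0 hU i _
      rw [h, smoothD0_mk, smoothD0_mk, smoothD0_mk]
      refine Subtype.ext (funext fun x => ?_)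
      change pd n i (F * H) x = F x * pd n i H x + H x * pd n i F x
      simp only [pd]
      rw [fderiv_mul (diffAt hU hF x.2) (diffAt hU hH x.2)]
      rfl)

theorem smoothD_mk (hU : IsOpen U) (i : Fin n) (F : (Fin n → ℝ) → ℝ)
    (hF : ContDiffOn ℝ (⊤ : ℕ∞) F U) :
    smoothD hU i (smoothMk F hF) = smoothMk (pd n i F) (pd_smooth hU hF i) :=
  smoothD0_mk hU i F hF

theorem smoothD_comm (hU : IsOpen U) (i j : Fin n) (f : smoothAlg U) :
    smoothD hU i (smoothD hU j f) = smoothD hU j (smoothD hU i f) := by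
  obtain ⟨F, hF, rfl⟩ := exists_smoothMk f
  simp only [smoothD_mk]
  exact smoothMk_ext fun x hx => pd_comm hU hF i j hx

/-- Evaluation at a point of `U`. -/
def smoothEv (x : U) : smoothAlg U →ₐ[ℝ] ℝ :=
  (Pi.evalAlgHom ℝ (fun _ : U => ℝ) x).comp (smoothAlg U).val

theorem smoothEv_mk (x : U) (F : (Fin n → ℝ) → ℝ) (hF : ContDiffOn ℝ (⊤ : ℕ∞) F U) :
    smoothEv x (smoothMk F hF) = F x := rfl

theorem smoothAlg_ext {a b : smoothAlg U} (h : ∀ x : U, smoothEv x a = smoothEv x b) : a = b :=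
  Subtype.ext (funext h)

theorem det_smooth {M : (Fin n → ℝ) → Matrix (Fin n) (Fin n) ℝ}
    (h : ∀ i j, ContDiffOn ℝ (⊤ : ℕ∞) (fun x => M x i j) U) :
    ContDiffOn ℝ (⊤ : ℕ∞) (fun x => (M x).det) U := by
  simp only [Matrix.det_apply]
  exact ContDiffOn.sum fun τ _ => (contDiffOn_prod fun i _ => h _ _).const_smul _

/-- Cramer's rule writes the entries of the inverse as quotients of determinants. -/
theorem gLow_smooth {g : Fin n → Fin n → (Fin n → ℝ) → ℝ}
    (hg : ∀ i j, ContDiffOn ℝ (⊤ : ℕ∞) (g i j) U) (hinv : ∀ x ∈ U, IsUnit (gMat n g x).det)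
    (i j : Fin n) : ContDiffOn ℝ (⊤ : ℕ∞) (fun x => gLow n g x i j) U := by
  have h : ∀ x, gLow n g x i j = ((gMat n g x).det)⁻¹ *
      ((gMat n g x).updateRow j (Pi.single i 1)).det := by
    intro x
    simp [gLow, Matrix.inv_def, Matrix.adjugate_apply]
  simp only [h]
  refine ((det_smooth (M := gMat n g) hg).inv fun x hx => (hinv x hx).ne_zero).mul
    (det_smooth fun a b => ?_)
  by_cases hab : a = j
  · subst hab
    simp only [Matrix.updateRow_self]
    exact contDiffOn_const
  · simp only [Matrix.updateRow_ne hab]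
    exact hg a b

theorem christoffel_smooth (hU : IsOpen U) {g : Fin n → Fin n → (Fin n → ℝ) → ℝ}
    (hg : ∀ i j, ContDiffOn ℝ (⊤ : ℕ∞) (g i j) U) (hinv : ∀ x ∈ U, IsUnit (gMat n g x).det)
    (i j k : Fin n) : ContDiffOn ℝ (⊤ : ℕ∞) (christoffel n g i j k) U := by
  have h := fun a b c => pd_smooth hU (gLow_smooth hg hinv a b) c
  exact contDiffOn_const.mul (ContDiffOn.sum fun m _ => (hg i m).mul
    (((h _ _ _).add (h _ _ _)).sub (h _ _ _)))

end Smooth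

/-! ### The coincidence limit -/

/-- Coincidence limit of the fourth partial derivatives of the Ruse–Synge function in the
first argument:
`[σ_{,ijkl}](x') = 4 g_{m(l} Γ^m_{ij,k)} + 4 g_{m(l} Γ^n_{ij} Γ^m_{k)n}
  + 3 g_{nm} Γ^n_{(ij} Γ^m_{kl)}`,
with round brackets denoting the average over all 24 permutations of `(i,j,k,l)`. -/
theorem ruseSynge_fourth_coincidence (n : ℕ) (hn : 1 ≤ n)
    (U : Set (Fin n → ℝ)) (hU : IsOpen U)
    (g : Fin n → Fin n → (Fin n → ℝ) → ℝ)
    (hgsmooth : ∀ i j, ContDiffOn ℝ (⊤ : ℕ∞) (g i j) U)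
    (hgsymm : ∀ i j, ∀ x ∈ U, g i j x = g j i x)
    (hginv : ∀ x ∈ U, IsUnit (gMat n g x).det)
    (σ : (Fin n → ℝ) → (Fin n → ℝ) → ℝ)
    (hσ : ContDiffOn ℝ (⊤ : ℕ∞) (fun p : (Fin n → ℝ) × (Fin n → ℝ) => σ p.1 p.2) (U ×ˢ U))
    (hσsymm : ∀ x ∈ U, ∀ x' ∈ U, σ x x' = σ x' x)
    (hHJ : ∀ x ∈ U, ∀ x' ∈ U,
      σ x x' = (1 / 2) * ∑ i, ∑ j, g i j x * d1 n i σ x x' * d1 n j σ x x')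
    (hdiag0 : ∀ x ∈ U, σ x x = 0)
    (hdiag1 : ∀ x ∈ U, ∀ i : Fin n, d1 n i σ x x = 0)
    (hhess : ∀ x ∈ U, IsUnit (Matrix.of fun i j => d1 n i (d1 n j σ) x x :
      Matrix (Fin n) (Fin n) ℝ).det)
    (x' : Fin n → ℝ) (hx' : x' ∈ U) :
    ∀ i j k l : Fin n,
      d1 n i (d1 n j (d1 n k (d1 n l σ))) x' x' =
        (1 / 24) * ∑ τ : Equiv.Perm (Fin 4),
          sigma4Term n g x' (![i, j, k, l] (τ 0)) (![i, j, k, l] (τ 1))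
            (![i, j, k, l] (τ 2)) (![i, j, k, l] (τ 3)) := by
  have hs : ContDiffOn ℝ (⊤ : ℕ∞) (fun x => σ x x') U :=
    hσ.comp (contDiffOn_id.prodMk contDiffOn_const) fun x hx => ⟨hx, hx'⟩
  have hL := gLow_smooth hgsmooth hginv
  have hΓ := christoffel_smooth hU hgsmooth hginv
  have hsymm : ∀ x ∈ U, (gMat n g x).transpose = gMat n g x := fun x hx =>
    Matrix.ext fun i j => hgsymm j i x hx
  -- The data at the fixed base point, in the algebra of smooth functions on `U`.
  let S : HJ n (smoothAlg U) :=
    { D := smoothD hU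
      comm := smoothD_comm hU
      ev := smoothEv ⟨x', hx'⟩
      g := fun i j => smoothMk (g i j) (hgsmooth i j)
      G := fun i j => smoothMk (fun x => gLow n g x i j) (hL i j)
      gsymm := fun i j => smoothMk_ext (hgsymm i j)
      gG := fun i j => smoothAlg_ext fun x => by
        have h := congrFun (congrFun (Matrix.mul_nonsing_inv _ (hginv x x.2)) i) j
        rw [Matrix.mul_apply, Matrix.one_apply] at h
        simp only [map_sum, map_mul, smoothEv_mk, apply_ite (smoothEv x), map_one, map_zero]
        exact h
      Gg := fun i j => smoothAlg_ext fun x => by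
        have h := congrFun (congrFun (Matrix.nonsing_inv_mul _ (hginv x x.2)) i) j
        rw [Matrix.mul_apply, Matrix.one_apply] at h
        simp only [map_sum, map_mul, smoothEv_mk, apply_ite (smoothEv x), map_one, map_zero]
        exact h
      Gsymm := fun i j => smoothMk_ext fun x hx => by
        have h : (gLow n g x).transpose = gLow n g x := by
          rw [gLow, Matrix.transpose_nonsing_inv, hsymm x hx]
        exact congrFun (congrFun h j) i
      Γ := fun i j k => smoothMk (christoffel n g i j k) (hΓ i j k)
      Γdef := fun i j k => smoothAlg_ext fun x => by
        simp only [map_sum, map_mul, map_add, map_sub, smoothD_mk, smoothEv_mk, map_ofNat]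
        rw [christoffel]; ring
      s := smoothMk (fun x => σ x x') hs
      hj := smoothAlg_ext fun x => by
        simp only [map_sum, map_mul, smoothD_mk, smoothEv_mk, map_ofNat]
        rw [hHJ x x.2 x' hx', ← mul_assoc]
        norm_num
        rfl
      ev1 := fun i => by
        rw [smoothD_mk, smoothEv_mk]
        exact hdiag1 x' hx' i
      hess := by
        simp only [smoothD_mk, smoothEv_mk]
        exact hhess x' hx' }
  intro i j k l
  have h := S.fourth ![i, j, k, l]
  simp only [HJ.E, HJ.T1, HJ.T2, HJ.T3, S, smoothD_mk, smoothEv_mk] at h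
  exact h
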